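/- Compactness lemma (Flandoli–Gatarek): let B₀ ⊂ B ⊂ B₁ be Banach spaces with B₀ compactly embedded in B, let p ∈ (1,∞) and α ∈ (0,1). Then the embedding L^p(0,T;B₀) ∩ W^{α,p}(0,T;B₁) ↪ L^p(0,T;B) is compact. Moreover, if α ∈ (0,1), p > 1 and αp > 1, and B₀ ⊂ B compactly, then W^{α,p}(0,T;B₀) ↪ C⁰([0,T];B) compactly. -/

import Mathlib

open MeasureTheory
open scoped ENNReal

noncomputable section

/-!
*Convergence in `L^p`.* By Ehrling's inequality `‖A x‖ ≤ η ‖x‖ + C ‖B (A x)‖`, for `A` compact and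
`B` injective, a set bounded in `L^p(E)` has totally bounded image under `A` as soon as its image
under `B ∘ A` is totally bounded. For the latter, cut the interval into `N` cells of length `h` and
choose in each cell a point at which `‖f‖ ^ p` plus the inner Gagliardo integral is at most its
average over the cell. Replacing `B ∘ A ∘ f` by its values at these points costs at most
`h ^ (α p) M` in the `p`-th power of the `L^p` norm, and the resulting step functions take values in
one compact set. As the middle space may be incomplete, the limit is first taken in its completion;
it is almost everywhere in the original space, because by Fatou's lemma almost every sequence
`A (f n t)` returns infinitely often to a compact set.

*Uniform convergence.* Let `x` be a point of an interval of length `h`. Along a sequence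
of intervals halving down to `x`, the mean `L^p` distances of `f` to the constant `f x` tend to `0`,
and by the energy bound the `n`-th exceeds the next by at most a multiple of
`(2⁻ⁿ h) ^ (α - 1/p)`. Summing the geometric series gives Morrey's estimate, hence a uniform Hölder
bound, and the Arzelà–Ascoli theorem applies.
-/

open Set Filter Metric ProbabilityTheory
open scoped NNReal Topology

section TotallyBounded

variable {X Y Z : Type*}
  [NormedAddCommGroup X] [NormedSpace ℝ X]
  [NormedAddCommGroup Y] [NormedSpace ℝ Y]
  [NormedAddCommGroup Z] [NormedSpace ℝ Z]

theorem totallyBounded_of_forall_exists_dist_lt {M : Type*} [PseudoMetricSpace M] {S : Set M}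
    (h : ∀ ε > 0, ∃ K : Set M, TotallyBounded K ∧ ∀ x ∈ S, ∃ y ∈ K, dist x y < ε) :
    TotallyBounded S := by
  refine totallyBounded_iff.2 fun ε hε => ?_
  obtain ⟨K, hK, hSK⟩ := h (ε / 2) (half_pos hε)
  obtain ⟨t, ht, hKt⟩ := totallyBounded_iff.1 hK (ε / 2) (half_pos hε)
  refine ⟨t, ht, fun x hx => ?_⟩
  obtain ⟨y, hyK, hxy⟩ := hSK x hx
  obtain ⟨z, hz, hyz⟩ := mem_iUnion₂.1 (hKt hyK)
  refine mem_iUnion₂.2 ⟨z, hz, ?_⟩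
  calc dist x z ≤ dist x y + dist y z := dist_triangle x y z
    _ < ε / 2 + ε / 2 := add_lt_add hxy hyz
    _ = ε := add_halves ε

theorem exists_norm_le_mul_add_mul_of_isCompactOperator {A : X →L[ℝ] Y} (hA : IsCompactOperator A)
    {B : Y →L[ℝ] Z} (hB : Function.Injective B) {η : ℝ} (hη : 0 < η) :
    ∃ C, 0 ≤ C ∧ ∀ x, ‖A x‖ ≤ η * ‖x‖ + C * ‖B (A x)‖ := by
  let K := closure (A '' closedBall 0 1) ∩ {y | η ≤ ‖y‖}
  have hK : IsCompact K :=
    (hA.isCompact_closure_image_closedBall (f := A.toLinearMap) 1).inter_right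
      (isClosed_le continuous_const continuous_norm)
  have hB_pos : ∀ y ∈ K, 0 < ‖B y‖ := fun y hy =>
    norm_pos_iff.2 <| (map_ne_zero_iff B hB).2 <| norm_pos_iff.1 <| hη.trans_le hy.2
  obtain ⟨c, hc, hBc⟩ := hK.exists_forall_le' B.continuous.norm.continuousOn hB_pos
  refine ⟨‖A‖ / c, by positivity, fun x => ?_⟩
  rcases eq_or_ne x 0 with rfl | hx
  · simp
  have hx_pos : 0 < ‖x‖ := norm_pos_iff.2 hx
  rcases le_or_gt ‖A x‖ (η * ‖x‖) with hsmall | hlarge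
  · exact hsmall.trans (le_add_of_nonneg_right (by positivity))
  have hmem : A (‖x‖⁻¹ • x) ∈ K := by
    refine ⟨subset_closure (mem_image_of_mem A ?_), ?_⟩
    · simp [norm_smul, hx]
    · rw [mem_ofPred_eq, map_smul, norm_smul, norm_inv, norm_norm, ← div_eq_inv_mul,
        le_div_iff₀ hx_pos]
      exact hlarge.le
  have hc_le : c * ‖x‖ ≤ ‖B (A x)‖ := by
    have := hBc _ hmem
    rwa [map_smul, map_smul, norm_smul, norm_inv, norm_norm, ← div_eq_inv_mul,
      le_div_iff₀ hx_pos] at this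
  calc ‖A x‖ ≤ ‖A‖ / c * (c * ‖x‖) := by
        rw [← mul_assoc, div_mul_cancel₀ _ hc.ne']
        exact A.le_opNorm x
    _ ≤ ‖A‖ / c * ‖B (A x)‖ := by gcongr
    _ ≤ η * ‖x‖ + ‖A‖ / c * ‖B (A x)‖ := le_add_of_nonneg_left (by positivity)

theorem totallyBounded_image_of_norm_le_mul_add_mul {A : X →L[ℝ] Y} {B : X →L[ℝ] Z} {S : Set X}
    (hS : Bornology.IsBounded S) (hBS : TotallyBounded (B '' S))
    (hAB : ∀ η > 0, ∃ C, 0 ≤ C ∧ ∀ x, ‖A x‖ ≤ η * ‖x‖ + C * ‖B x‖) :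
    TotallyBounded (A '' S) := by
  obtain ⟨R, hR, hSR⟩ := hS.exists_pos_norm_le
  refine totallyBounded_iff.2 fun ε hε => ?_
  obtain ⟨C, hC, hAC⟩ := hAB (ε / (4 * R)) (by positivity)
  obtain ⟨s, hsS, hs, hcover⟩ := exists_subset_image_finite_and.1
    (finite_approx_of_totallyBounded hBS (ε / (2 * (C + 1))) (by positivity))
  refine ⟨A '' s, hs.image A, ?_⟩
  rintro _ ⟨x, hx, rfl⟩
  obtain ⟨_, ⟨y, hy, rfl⟩, hxy⟩ := mem_iUnion₂.1 (hcover (mem_image_of_mem B hx))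
  refine mem_iUnion₂.2 ⟨A y, mem_image_of_mem A hy, ?_⟩
  have hxy_norm : ‖x - y‖ ≤ 2 * R :=
    (norm_sub_le x y).trans (by linarith [hSR x hx, hSR y (hsS hy)])
  have hBxy : ‖B (x - y)‖ ≤ ε / (2 * (C + 1)) := by
    rw [map_sub, ← dist_eq_norm]
    exact (mem_ball.1 hxy).le
  rw [mem_ball, dist_eq_norm, ← map_sub]
  calc ‖A (x - y)‖ ≤ ε / (4 * R) * ‖x - y‖ + C * ‖B (x - y)‖ := hAC _
    _ ≤ ε / (4 * R) * (2 * R) + C * (ε / (2 * (C + 1))) := by gcongr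
    _ = ε / 2 + ε / 2 * (C / (C + 1)) := by field_simp; ring
    _ < ε / 2 + ε / 2 * 1 := by
        gcongr
        exact (div_lt_one (by positivity)).2 (lt_add_one C)
    _ = ε := by ring

end TotallyBounded

section Lp

variable {X E : Type*} {mX : MeasurableSpace X} {μ : Measure X} [NormedAddCommGroup E] {p : ℝ≥0∞}

theorem totallyBounded_setOf_ae_eq_comp [IsFiniteMeasure μ] [Fact (1 ≤ p)] {ι : Type*} [Finite ι]
    [MeasurableSpace ι] [DiscreteMeasurableSpace ι] {idx : X → ι} (hidx : Measurable idx)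
    {K : Set E} (hK : IsCompact K) :
    TotallyBounded {u : Lp E p μ | ∃ v : ι → E, (∀ i, v i ∈ K) ∧ u =ᵐ[μ] v ∘ idx} := by
  have := Fintype.ofFinite ι
  have hmem (v : ι → E) : MemLp (v ∘ idx) p μ :=
    MemLp.of_discrete.comp_of_map hidx.aemeasurable
  have hlip : LipschitzWith (measureUnivNNReal μ ^ p.toReal⁻¹) fun v =>
      (hmem v).toLp (v ∘ idx) := by
    refine LipschitzWith.of_dist_le_mul fun v w => ?_
    rw [dist_eq_norm, ← MemLp.toLp_sub, dist_eq_norm]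
    refine Lp.norm_le_of_ae_bound (norm_nonneg _) ?_
    filter_upwards [((hmem v).sub (hmem w)).coeFn_toLp] with x hx
    rw [hx]
    exact norm_le_pi_norm (v - w) (idx x)
  refine ((isCompact_univ_pi fun _ => hK).image hlip.continuous).totallyBounded.subset ?_
  rintro u ⟨v, hvK, huv⟩
  exact ⟨v, fun i _ => hvK i, Lp.ext ((hmem v).coeFn_toLp.trans huv.symm)⟩

variable {F G : Type*} [NormedSpace ℝ E] [NormedAddCommGroup F] [NormedSpace ℝ F]
  [NormedAddCommGroup G] [NormedSpace ℝ G]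

theorem norm_compLpL_le_mul_add_mul [Fact (1 ≤ p)] {A : E →L[ℝ] F} {B : E →L[ℝ] G}
    {η C : ℝ} (hη : 0 ≤ η) (hC : 0 ≤ C) (hAB : ∀ x, ‖A x‖ ≤ η * ‖x‖ + C * ‖B x‖)
    (u : Lp E p μ) :
    ‖A.compLpL p μ u‖ ≤ η * ‖u‖ + C * ‖B.compLpL p μ u‖ := by
  let U : Lp ℝ p μ := (Lp.memLp u).norm.toLp
  let V : Lp ℝ p μ := (Lp.memLp (B.compLpL p μ u)).norm.toLp
  have hle : ‖A.compLpL p μ u‖ ≤ ‖η • U + C • V‖ := by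
    refine Lp.norm_le_norm_of_ae_le ?_
    filter_upwards [A.coeFn_compLpL u, B.coeFn_compLpL u, Lp.coeFn_add (η • U) (C • V),
      Lp.coeFn_smul η U, Lp.coeFn_smul C V, (Lp.memLp u).norm.coeFn_toLp,
      (Lp.memLp (B.compLpL p μ u)).norm.coeFn_toLp] with x hA hB hadd hηU hCV hU hV
    rw [hadd, Pi.add_apply, hηU, hCV, Pi.smul_apply, Pi.smul_apply, hU, hV, hA, hB]
    exact (hAB (u x)).trans (le_abs_self _)
  calc ‖A.compLpL p μ u‖ ≤ ‖η • U‖ + ‖C • V‖ := hle.trans (norm_add_le _ _)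
    _ = η * ‖u‖ + C * ‖B.compLpL p μ u‖ := by
        rw [norm_smul, norm_smul, Real.norm_of_nonneg hη, Real.norm_of_nonneg hC,
          Lp.norm_toLp, Lp.norm_toLp, eLpNorm_norm, eLpNorm_norm, ← Lp.norm_def, ← Lp.norm_def]

end Lp

section Gagliardo

variable {X E : Type*} [PseudoMetricSpace X] [SeminormedAddCommGroup E] {p q : ℝ} {f : X → E}

/-- The integrand of the Gagliardo energy. For `p, q > 0` it vanishes on the diagonal, by the
convention `0 / 0 = 0`. -/
def gagliardoKernel (p q : ℝ) (f : X → E) (x y : X) : ℝ≥0∞ :=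
  ‖f x - f y‖ₑ ^ p / ENNReal.ofReal (dist x y ^ q)

theorem enorm_sub_rpow_le_mul_gagliardoKernel (hq : 0 ≤ q) {r : ℝ} (hr : 0 < r) {x y : X}
    (hxy : dist x y ≤ r) :
    ‖f x - f y‖ₑ ^ p ≤ ENNReal.ofReal (r ^ q) * gagliardoKernel p q f x y := by
  have hrq : ENNReal.ofReal (r ^ q) ≠ 0 := by simpa using Real.rpow_pos_of_pos hr q
  calc ‖f x - f y‖ₑ ^ p
      = ENNReal.ofReal (r ^ q) * (‖f x - f y‖ₑ ^ p / ENNReal.ofReal (r ^ q)) :=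
        (ENNReal.mul_div_cancel hrq ENNReal.ofReal_ne_top).symm
    _ ≤ ENNReal.ofReal (r ^ q) * gagliardoKernel p q f x y := by
        unfold gagliardoKernel
        gcongr

variable [MeasurableSpace X] {μ ν : Measure X}

/-- The `p`-th power of the Gagliardo–Slobodeckij seminorm of `f`; on a domain of dimension `d`, the
seminorm of `W^{α,p}` is the case `q = d + α * p`. -/
def gagliardoEnergy (p q : ℝ) (μ : Measure X) (f : X → E) : ℝ≥0∞ :=
  ∫⁻ x, ∫⁻ y, gagliardoKernel p q f x y ∂μ ∂μ

theorem aemeasurable_gagliardoKernel [OpensMeasurableSpace X] [SecondCountableTopology X]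
    (hμ : AEStronglyMeasurable f μ) (hν : AEStronglyMeasurable f ν) :
    AEMeasurable (fun z : X × X => gagliardoKernel p q f z.1 z.2) (μ.prod ν) :=
  ((hμ.comp_fst.sub hν.comp_snd).enorm.pow_const p).div (by fun_prop)

theorem aemeasurable_gagliardoKernel_left [OpensMeasurableSpace X]
    (hf : AEStronglyMeasurable f μ) (x : X) : AEMeasurable (gagliardoKernel p q f x) μ :=
  ((aestronglyMeasurable_const.sub hf).enorm.pow_const p).div (by fun_prop)

theorem gagliardoEnergy_mono_measure (hμν : μ ≤ ν) (f : X → E) :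
    gagliardoEnergy p q μ f ≤ gagliardoEnergy p q ν f :=
  lintegral_mono' hμν fun _ => lintegral_mono' hμν le_rfl

theorem gagliardoEnergy_congr_ae {g : X → E} (hfg : f =ᵐ[μ] g) :
    gagliardoEnergy p q μ f = gagliardoEnergy p q μ g := by
  refine lintegral_congr_ae ?_
  filter_upwards [hfg] with x hx
  refine lintegral_congr_ae ?_
  filter_upwards [hfg] with y hy
  rw [gagliardoKernel, gagliardoKernel, hx, hy]

end Gagliardo

section Sampling

variable {X ι : Type*} [MeasurableSpace X] {μ : Measure X} [MeasurableSpace ι]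
  [MeasurableSingletonClass ι] {idx : X → ι} {s : Set X}

theorem exists_sum_measure_mul_le_lintegral [Fintype ι] [IsFiniteMeasure μ] (hidx : Measurable idx)
    (hcell : ∀ i, μ (idx ⁻¹' {i}) ≠ 0) (hs : ∀ᵐ x ∂μ, x ∈ s) {H : X → ℝ≥0∞}
    (hH : AEMeasurable H μ) :
    ∃ τ : ι → X, (∀ i, τ i ∈ s ∧ idx (τ i) = i) ∧
      ∑ i, μ (idx ⁻¹' {i}) * H (τ i) ≤ ∫⁻ x, H x ∂μ := by
  have hmeas (i : ι) : MeasurableSet (idx ⁻¹' {i}) := hidx (measurableSet_singleton i)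
  have hsample (i : ι) : ∃ x, (x ∈ s ∧ idx x = i) ∧
      μ (idx ⁻¹' {i}) * H x ≤ ∫⁻ x in idx ⁻¹' {i}, H x ∂μ := by
    have hbad : μ.restrict (idx ⁻¹' {i}) {x | ¬(x ∈ s ∧ idx x = i)} = 0 := by
      rw [← ae_iff]
      filter_upwards [ae_restrict_of_ae hs, ae_restrict_mem (hmeas i)] with x hxs hxi
      exact ⟨hxs, hxi⟩
    obtain ⟨x, hx, hHx⟩ := exists_notMem_null_le_laverage
      (by simpa using hcell i) hH.restrict hbad
    refine ⟨x, not_not.1 hx, ?_⟩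
    rw [← measure_mul_setLAverage H (measure_ne_top μ _)]
    gcongr
  choose τ hτ hHτ using hsample
  refine ⟨τ, hτ, (Finset.sum_le_sum fun i _ => hHτ i).trans_eq ?_⟩
  rw [← tsum_fintype (L := .unconditional ι), ← lintegral_iUnion hmeas, ← preimage_iUnion,
    iUnion_of_singleton, preimage_univ, Measure.restrict_univ]
  exact fun i j hij => Disjoint.preimage idx (disjoint_singleton.2 hij)

variable {E F : Type*} [PseudoMetricSpace X] [OpensMeasurableSpace X] [SecondCountableTopology X]
  [SeminormedAddCommGroup E] [SeminormedAddCommGroup F]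

theorem exists_sample_lintegral_le [Finite ι] [IsFiniteMeasure μ] (hidx : Measurable idx)
    {m : ℝ≥0∞} (hm : m ≠ 0) (hcell : ∀ i, m ≤ μ (idx ⁻¹' {i})) (hs : ∀ᵐ x ∂μ, x ∈ s)
    {r : ℝ} (hr : 0 < r)
    (hdist : ∀ x ∈ s, ∀ y ∈ s, idx x = idx y → dist x y ≤ r) {p q : ℝ} (hq : 0 ≤ q)
    {f : X → E} (hf : AEStronglyMeasurable f μ) {g : X → F} (hg : AEStronglyMeasurable g μ) :
    ∃ τ : ι → X,
      (∀ i, m * ‖f (τ i)‖ₑ ^ p ≤ ∫⁻ x, ‖f x‖ₑ ^ p ∂μ + gagliardoEnergy p q μ g) ∧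
      m * ∫⁻ x, ‖g x - g (τ (idx x))‖ₑ ^ p ∂μ ≤
        ENNReal.ofReal (r ^ q) * (∫⁻ x, ‖f x‖ₑ ^ p ∂μ + gagliardoEnergy p q μ g) := by
  have := Fintype.ofFinite ι
  have hJ : AEMeasurable (fun x => ∫⁻ y, gagliardoKernel p q g x y ∂μ) μ :=
    (aemeasurable_gagliardoKernel hg hg).lintegral_prod_right'
  have hfp : AEMeasurable (fun x => ‖f x‖ₑ ^ p) μ := hf.enorm.pow_const p
  obtain ⟨τ, hτ, hsum⟩ := exists_sum_measure_mul_le_lintegral hidx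
    (fun i => (hm.bot_lt.trans_le (hcell i)).ne') hs (hfp.add hJ)
  simp only [Pi.add_apply] at hsum
  rw [lintegral_add_left' hfp] at hsum
  have hpoint : ∀ᵐ x ∂μ, ‖g x - g (τ (idx x))‖ₑ ^ p ≤
      ENNReal.ofReal (r ^ q) * ∑ i, gagliardoKernel p q g (τ i) x := by
    filter_upwards [hs] with x hx
    rw [← neg_sub, enorm_neg]
    refine (enorm_sub_rpow_le_mul_gagliardoKernel hq hr
      (hdist _ (hτ (idx x)).1 x hx (hτ (idx x)).2)).trans ?_
    gcongr
    exact Finset.single_le_sum (f := fun i => gagliardoKernel p q g (τ i) x)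
      (fun _ _ => zero_le) (Finset.mem_univ (idx x))
  refine ⟨τ, fun i => ?_, ?_⟩
  · calc m * ‖f (τ i)‖ₑ ^ p
        ≤ μ (idx ⁻¹' {i}) * (‖f (τ i)‖ₑ ^ p + ∫⁻ y, gagliardoKernel p q g (τ i) y ∂μ) :=
          mul_le_mul' (hcell i) le_self_add
      _ ≤ _ := (Finset.single_le_sum (fun _ _ => zero_le) (Finset.mem_univ i)).trans hsum
  · calc m * ∫⁻ x, ‖g x - g (τ (idx x))‖ₑ ^ p ∂μ
        ≤ m * (ENNReal.ofReal (r ^ q) * ∑ i, ∫⁻ x, gagliardoKernel p q g (τ i) x ∂μ) := by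
          rw [← lintegral_finsetSum' _ fun i _ => aemeasurable_gagliardoKernel_left hg (τ i),
            ← lintegral_const_mul' _ _ ENNReal.ofReal_ne_top]
          gcongr 1
          exact lintegral_mono_ae hpoint
      _ = ENNReal.ofReal (r ^ q) * ∑ i, m * ∫⁻ x, gagliardoKernel p q g (τ i) x ∂μ := by
          rw [mul_left_comm, Finset.mul_sum]
      _ ≤ ENNReal.ofReal (r ^ q) * (∫⁻ x, ‖f x‖ₑ ^ p ∂μ + gagliardoEnergy p q μ g) := by
          gcongr
          refine (Finset.sum_le_sum fun i _ => ?_).trans hsum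
          exact mul_le_mul' (hcell i) le_add_self

end Sampling

theorem exists_uniform_partition_Ioc {a b : ℝ} (hab : a < b) (N : ℕ) [NeZero N] :
    ∃ idx : ℝ → Fin N, Measurable idx ∧
      (∀ i, volume.restrict (Ioc a b) (idx ⁻¹' {i}) = ENNReal.ofReal ((b - a) / N)) ∧
      ∀ x ∈ Ioc a b, ∀ y ∈ Ioc a b, idx x = idx y → dist x y ≤ (b - a) / N := by
  have hN : (0 : ℝ) < N := Nat.cast_pos.2 (NeZero.pos N)
  set h := (b - a) / N
  have h_pos : 0 < h := div_pos (sub_pos.2 hab) hN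
  have hNh : N * h = b - a := mul_div_cancel₀ _ hN.ne'
  let idx : ℝ → Fin N := fun t => Fin.ofNat N (⌈(t - a) / h⌉₊ - 1)
  have hidx : Measurable idx :=
    (Measurable.of_discrete (f := fun n : ℕ => Fin.ofNat N (n - 1))).comp
      (Nat.measurable_ceil.comp (by fun_prop))
  have hidx_iff {t : ℝ} (ht : t ∈ Ioc a b) (i : Fin N) :
      idx t = i ↔ t ∈ Ioc (a + i * h) (a + i * h + h) := by
    have hceil_pos : 0 < ⌈(t - a) / h⌉₊ := Nat.ceil_pos.2 (div_pos (sub_pos.2 ht.1) h_pos)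
    have hceil_le : ⌈(t - a) / h⌉₊ ≤ N :=
      Nat.ceil_le.2 ((div_le_iff₀ h_pos).2 (by linarith [ht.2]))
    have : idx t = i ↔ ⌈(t - a) / h⌉₊ = i + 1 := by
      rw [Fin.ext_iff, Fin.val_ofNat, Nat.mod_eq_of_lt (by lia)]
      lia
    rw [this, Nat.ceil_eq_iff i.val.succ_ne_zero, lt_div_iff₀ h_pos, div_le_iff₀ h_pos, mem_Ioc]
    push_cast
    constructor <;> rintro ⟨h₁, h₂⟩ <;> constructor <;> linarith
  refine ⟨idx, hidx, fun i => ?_, fun x hx y hy hxy => ?_⟩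
  · have hi : ((i : ℕ) : ℝ) + 1 ≤ N := mod_cast i.isLt
    have hcell : idx ⁻¹' {i} ∩ Ioc a b = Ioc (a + i * h) (a + i * h + h) := by
      ext t
      refine ⟨fun ht => (hidx_iff ht.2 i).1 ht.1, fun ht => ?_⟩
      have htab : t ∈ Ioc a b := by
        refine Ioc_subset_Ioc (le_add_of_nonneg_right (by positivity)) ?_ ht
        nlinarith
      exact ⟨(hidx_iff htab i).2 ht, htab⟩
    rw [Measure.restrict_apply (hidx (measurableSet_singleton i)), hcell, Real.volume_Ioc,
      add_sub_cancel_left]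
  · have hx' := (hidx_iff hx _).1 hxy
    have hy' := (hidx_iff hy _).1 rfl
    rw [Real.dist_eq, abs_sub_le_iff]
    constructor <;> linarith [hx'.1, hx'.2, hy'.1, hy'.2]

section StepApproximation

variable {E F : Type*} [NormedAddCommGroup E] [NormedAddCommGroup F] {a b : ℝ}

theorem exists_step_lintegral_le (hab : a < b) (N : ℕ) [NeZero N] {p α : ℝ} (hp : 0 ≤ p)
    (hα : 0 ≤ α) :
    ∃ idx : ℝ → Fin N, Measurable idx ∧ ∀ {f : ℝ → E} {g : ℝ → F} {M : ℝ≥0∞},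
      AEStronglyMeasurable f (volume.restrict (Ioc a b)) →
      AEStronglyMeasurable g (volume.restrict (Ioc a b)) →
      (∫⁻ t in Ioc a b, ‖f t‖ₑ ^ p) +
        gagliardoEnergy p (1 + α * p) (volume.restrict (Ioc a b)) g ≤ M →
      ∃ τ : Fin N → ℝ,
        (∀ i, ‖f (τ i)‖ₑ ^ p ≤ M / ENNReal.ofReal ((b - a) / N)) ∧
        ∫⁻ t in Ioc a b, ‖g t - g (τ (idx t))‖ₑ ^ p ≤
          ENNReal.ofReal (((b - a) / N) ^ (α * p)) * M := by
  obtain ⟨idx, hidx, hcell, hdist⟩ := exists_uniform_partition_Ioc hab N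
  have h_pos : 0 < (b - a) / N := div_pos (sub_pos.2 hab) (Nat.cast_pos.2 (NeZero.pos N))
  set h := (b - a) / N
  have hm : ENNReal.ofReal h ≠ 0 := by simpa using h_pos
  refine ⟨idx, hidx, fun {f g M} hf hg hM => ?_⟩
  obtain ⟨τ, hτ, herr⟩ := exists_sample_lintegral_le hidx hm (fun i => (hcell i).ge)
    (ae_restrict_mem measurableSet_Ioc) h_pos hdist (q := 1 + α * p) (by positivity) hf hg
  refine ⟨τ, fun i => ?_, ?_⟩
  · rw [ENNReal.le_div_iff_mul_le (.inl hm) (.inl ENNReal.ofReal_ne_top), mul_comm]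
    exact (hτ i).trans hM
  · rw [Real.rpow_add h_pos, Real.rpow_one, ENNReal.ofReal_mul h_pos.le, mul_assoc,
      ENNReal.mul_le_mul_iff_right hm ENNReal.ofReal_ne_top] at herr
    exact herr.trans (by gcongr)

theorem tendsto_ofReal_div_rpow_mul_atTop (c : ℝ) {s : ℝ} (hs : 0 < s) {M : ℝ≥0∞} (hM : M ≠ ⊤) :
    Tendsto (fun n : ℕ => ENNReal.ofReal ((c / (n + 1 : ℕ)) ^ s) * M) atTop (𝓝 0) := by
  have hdiv : Tendsto (fun n : ℕ => c / (n + 1 : ℕ)) atTop (𝓝 0) :=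
    (tendsto_const_div_atTop_nhds_zero_nat c).comp (tendsto_add_atTop_nat 1)
  have hrpow := hdiv.rpow_const (p := s) (.inr hs.le)
  rw [Real.zero_rpow hs.ne'] at hrpow
  simpa using ENNReal.Tendsto.mul_const (ENNReal.tendsto_ofReal hrpow) (.inr hM)

theorem totallyBounded_compLpL_image_of_gagliardoEnergy_le [NormedSpace ℝ E] [NormedSpace ℝ F]
    (hab : a < b) {p : ℝ≥0} [Fact (1 ≤ (p : ℝ≥0∞))] {α : ℝ} (hα : 0 < α) {A : E →L[ℝ] F}
    (hA : IsCompactOperator A) {M : ℝ≥0∞} (hM : M ≠ ⊤)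
    {S : Set (Lp E p (volume.restrict (Ioc a b)))}
    (hS : ∀ u ∈ S, (∫⁻ t in Ioc a b, ‖u t‖ₑ ^ (p : ℝ)) +
      gagliardoEnergy p (1 + α * p) (volume.restrict (Ioc a b)) (fun t => A (u t)) ≤ M) :
    TotallyBounded (A.compLpL p (volume.restrict (Ioc a b)) '' S) := by
  have hp : 0 < p := zero_lt_one.trans_le (mod_cast Fact.out (p := 1 ≤ (p : ℝ≥0∞)))
  refine totallyBounded_of_forall_exists_dist_lt fun ε hε => ?_
  obtain ⟨n, hn⟩ := ((tendsto_ofReal_div_rpow_mul_atTop (b - a)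
    (mul_pos hα hp) hM).eventually_lt_const (u := ENNReal.ofReal ε ^ (p : ℝ))
    (ENNReal.rpow_pos (by simpa) ENNReal.ofReal_ne_top)).exists
  obtain ⟨idx, hidx, hstep⟩ := exists_step_lintegral_le (E := E) (F := F) hab (n + 1) p.2 hα.le
  let R := (M / ENNReal.ofReal ((b - a) / (n + 1 : ℕ))) ^ (p : ℝ)⁻¹
  have hR : R ≠ ⊤ := ENNReal.rpow_ne_top_of_nonneg (by positivity)
    (ENNReal.div_ne_top hM (by simpa using by positivity))
  refine ⟨_, totallyBounded_setOf_ae_eq_comp hidx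
    (hA.isCompact_closure_image_closedBall (f := A.toLinearMap) R.toReal), ?_⟩
  rintro _ ⟨u, hu, rfl⟩
  obtain ⟨τ, hτ, herr⟩ := hstep (Lp.aestronglyMeasurable u)
    (A.continuous.comp_aestronglyMeasurable (Lp.aestronglyMeasurable u)) (hS u hu)
  have hu_le (i : Fin (n + 1)) : ‖u (τ i)‖ ≤ R.toReal := by
    rw [← toReal_enorm]
    exact ENNReal.toReal_mono hR ((ENNReal.le_rpow_inv_iff (NNReal.coe_pos.2 hp)).2 (hτ i))
  have hw : MemLp ((fun i => A (u (τ i))) ∘ idx) p (volume.restrict (Ioc a b)) :=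
    MemLp.of_discrete.comp_of_map hidx.aemeasurable
  refine ⟨hw.toLp, ⟨fun i => A (u (τ i)), fun i => subset_closure <| mem_image_of_mem A <|
    mem_closedBall_zero_iff.2 (hu_le i), hw.coeFn_toLp⟩, ?_⟩
  rw [← edist_lt_ofReal, Lp.edist_def, ← ENNReal.rpow_lt_rpow_iff (NNReal.coe_pos.2 hp),
      eLpNorm_nnreal_pow_eq_lintegral hp.ne']
  refine (lintegral_congr_ae ?_).trans_lt (herr.trans_lt hn)
  filter_upwards [A.coeFn_compLpL u, hw.coeFn_toLp] with t hAu hwt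
  rw [Pi.sub_apply, hAu, hwt]
  rfl

end StepApproximation

section Completion

variable {X E F : Type*} {mX : MeasurableSpace X} {μ : Measure X} [NormedAddCommGroup E]
  {p : ℝ≥0∞}

theorem ae_exists_frequently_norm_le (hp : p ≠ 0) {f : ℕ → X → E}
    (hf : ∀ n, AEStronglyMeasurable (f n) μ) {R : ℝ≥0} (hfR : ∀ n, eLpNorm (f n) p μ ≤ R) :
    ∀ᵐ x ∂μ, ∃ c, ∃ᶠ n in atTop, ‖f n x‖ ≤ c := by
  have hmk : ∀ᵐ x ∂μ, ∀ n, ‖f n x‖ = (hf n).norm.mk _ x :=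
    ae_all_iff.2 fun n => (hf n).norm.ae_eq_mk
  have hbdd (n : ℕ) : eLpNorm ((hf n).norm.mk _) p μ ≤ R :=
    (eLpNorm_congr_ae (hf n).norm.ae_eq_mk).symm.trans_le ((eLpNorm_norm _).trans_le (hfR n))
  filter_upwards [hmk, ae_bdd_liminf_atTop_of_eLpNorm_bdd hp
    (fun n => (hf n).norm.stronglyMeasurable_mk.measurable) hbdd] with x hx hliminf
  obtain ⟨c, hxc, hc⟩ := exists_between hliminf
  refine ⟨c.toReal, (frequently_lt_of_liminf_lt (by isBoundedDefault) hxc).mono fun n hn => ?_⟩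
  rw [← hx, enorm_norm] at hn
  rw [← toReal_enorm]
  exact ENNReal.toReal_mono hc.ne hn.le

theorem exists_aestronglyMeasurable_comp_ae_eq {Y Z : Type*} [TopologicalSpace Y]
    [TopologicalSpace.PseudoMetrizableSpace Y] [TopologicalSpace Z] [T2Space Z] {j : Y → Z}
    (hj : Topology.IsInducing j) [Nonempty Y] {u : ℕ → X → Y}
    (hu : ∀ n, AEStronglyMeasurable (u n) μ) {h : X → Z}
    (hlim : ∀ᵐ x ∂μ, Tendsto (fun n => j (u n x)) atTop (𝓝 (h x)))
    (hcpt : ∀ᵐ x ∂μ, ∃ K, IsCompact K ∧ ∃ᶠ n in atTop, u n x ∈ K) :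
    ∃ g : X → Y, AEStronglyMeasurable g μ ∧ ∀ᵐ x ∂μ, j (g x) = h x := by
  have hrange : ∀ᵐ x ∂μ, ∃ y, j y = h x := by
    filter_upwards [hlim, hcpt] with x hx ⟨K, hK, huK⟩
    obtain ⟨y, -, hy⟩ := (hK.image hj.continuous).isClosed.mem_of_frequently_of_tendsto
      (huK.mono fun n hn => mem_image_of_mem j hn) hx
    exact ⟨y, hy⟩
  obtain ⟨g, hg⟩ : ∃ g : X → Y, ∀ᵐ x ∂μ, j (g x) = h x := by
    choose! g hg using fun x (hx : ∃ y, j y = h x) => hx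
    exact ⟨g, hrange.mono hg⟩
  refine ⟨g, aestronglyMeasurable_of_tendsto_ae atTop hu ?_, hg⟩
  filter_upwards [hlim, hg] with x hx hgx
  rw [hj.tendsto_nhds_iff, hgx]
  exact hx

variable [NormedAddCommGroup F]

theorem exists_subseq_tendsto_ae_of_totallyBounded [CompleteSpace F] [Fact (1 ≤ p)]
    {w : ℕ → Lp F p μ} (hw : TotallyBounded (range w)) :
    ∃ φ : ℕ → ℕ, StrictMono φ ∧ ∃ h : Lp F p μ, Tendsto (w ∘ φ) atTop (𝓝 h) ∧
      ∀ᵐ x ∂μ, Tendsto (fun n => w (φ n) x) atTop (𝓝 (h x)) := by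
  obtain ⟨h, -, φ, hφ, hlim⟩ := (hw.closure.isCompact_of_isClosed isClosed_closure).tendsto_subseq
    fun n => subset_closure (mem_range_self n)
  obtain ⟨ψ, hψ, hae⟩ := (tendstoInMeasure_of_tendsto_Lp hlim).exists_seq_tendsto_ae
  exact ⟨φ ∘ ψ, hφ.comp hψ, h, hlim.comp hψ.tendsto_atTop, hae⟩

variable [NormedSpace ℝ E] [NormedSpace ℝ F]

theorem ae_exists_isCompact_frequently_mem (hp : p ≠ 0) {A : E →L[ℝ] F}
    (hA : IsCompactOperator A) {f : ℕ → X → E} (hf : ∀ n, AEStronglyMeasurable (f n) μ) {R : ℝ≥0}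
    (hfR : ∀ n, eLpNorm (f n) p μ ≤ R) :
    ∀ᵐ x ∂μ, ∃ K, IsCompact K ∧ ∃ᶠ n in atTop, A (f n x) ∈ K := by
  filter_upwards [ae_exists_frequently_norm_le hp hf hfR] with x ⟨c, hc⟩
  exact ⟨_, hA.isCompact_closure_image_closedBall (f := A.toLinearMap) c, hc.mono fun n hn =>
    subset_closure (mem_image_of_mem A (mem_closedBall_zero_iff.2 hn))⟩

theorem exists_subseq_tendsto_eLpNorm_of_isCompactOperator [Fact (1 ≤ p)] {A : E →L[ℝ] F}
    (hA : IsCompactOperator A) {u : ℕ → Lp E p μ} (hu : Bornology.IsBounded (range u))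
    (htb : TotallyBounded (A.compLpL p μ '' range u)) :
    ∃ φ : ℕ → ℕ, StrictMono φ ∧ ∃ g : X → F, AEStronglyMeasurable g μ ∧
      Tendsto (fun n => eLpNorm (fun x => A (u (φ n) x) - g x) p μ) atTop (𝓝 0) := by
  have hp : p ≠ 0 := (zero_lt_one.trans_le Fact.out).ne'
  let j : F →ₗᵢ[ℝ] UniformSpace.Completion F := UniformSpace.Completion.toComplₗᵢ
  let J := j.toContinuousLinearMap.compLpL p μ
  have hJ (n : ℕ) : ∀ᵐ x ∂μ, J (A.compLpL p μ (u n)) x = j (A (u n x)) := by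
    filter_upwards [j.toContinuousLinearMap.coeFn_compLpL (A.compLpL p μ (u n)),
      A.coeFn_compLpL (u n)] with x hjx hAx
    rw [hjx, hAx, LinearIsometry.coe_toContinuousLinearMap]
  have htbJ : TotallyBounded (range fun n => J (A.compLpL p μ (u n))) := by
    have := htb.image J.uniformContinuous
    rwa [← range_comp, ← range_comp] at this
  obtain ⟨φ, hφ, h, hlim, hae⟩ := exists_subseq_tendsto_ae_of_totallyBounded htbJ
  have hae_j : ∀ᵐ x ∂μ, Tendsto (fun n => j (A (u (φ n) x))) atTop (𝓝 (h x)) := by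
    filter_upwards [hae, ae_all_iff.2 hJ] with x hx hJx
    simpa only [hJx] using hx
  obtain ⟨R, hR⟩ := hu.exists_norm_le
  have huR (n : ℕ) : eLpNorm (u (φ n)) p μ ≤ R.toNNReal := by
    rw [← Lp.enorm_def, ← ofReal_norm]
    exact ENNReal.ofReal_le_ofReal (hR _ (mem_range_self _))
  obtain ⟨g, hg, hgh⟩ := exists_aestronglyMeasurable_comp_ae_eq j.isometry.isEmbedding.isInducing
    (fun n => A.continuous.comp_aestronglyMeasurable (Lp.aestronglyMeasurable (u (φ n)))) hae_j
    (ae_exists_isCompact_frequently_mem hp hA (fun n => Lp.aestronglyMeasurable _) huR)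
  refine ⟨φ, hφ, g, hg, (tendsto_iff_edist_tendsto_0.1 hlim).congr fun n => ?_⟩
  rw [Lp.edist_def]
  refine eLpNorm_congr_enorm_ae ?_
  filter_upwards [hgh, hJ (φ n)] with x hgx hJx
  rw [Pi.sub_apply, Function.comp_apply, hJx, ← hgx, ← map_sub, j.enorm_map]

end Completion

section AubinLions

variable {E F G : Type*} [NormedAddCommGroup E] [NormedSpace ℝ E] [NormedAddCommGroup F]
  [NormedSpace ℝ F] [NormedAddCommGroup G] [NormedSpace ℝ G] {A : E →L[ℝ] F} {B : F →L[ℝ] G}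
  {a b α : ℝ} {M : ℝ≥0∞}

theorem totallyBounded_compLpL_image_of_injective_of_gagliardoEnergy_le
    (hA : IsCompactOperator A) (hB : Function.Injective B) (hab : a < b) {p : ℝ≥0}
    [Fact (1 ≤ (p : ℝ≥0∞))] (hα : 0 < α) (hM : M ≠ ⊤)
    {S : Set (Lp E p (volume.restrict (Ioc a b)))} (hS : Bornology.IsBounded S)
    (hSM : ∀ u ∈ S, (∫⁻ t in Ioc a b, ‖u t‖ₑ ^ (p : ℝ)) +
      gagliardoEnergy p (1 + α * p) (volume.restrict (Ioc a b)) (fun t => B (A (u t))) ≤ M) :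
    TotallyBounded (A.compLpL p (volume.restrict (Ioc a b)) '' S) := by
  have htb : TotallyBounded ((B.comp A).compLpL p (volume.restrict (Ioc a b)) '' S) :=
    totallyBounded_compLpL_image_of_gagliardoEnergy_le hab hα (hA.clm_comp B) hM hSM
  refine totallyBounded_image_of_norm_le_mul_add_mul hS htb fun η hη => ?_
  obtain ⟨C, hC, hAB⟩ := exists_norm_le_mul_add_mul_of_isCompactOperator hA hB hη
  exact ⟨C, hC, norm_compLpL_le_mul_add_mul (B := B.comp A) hη.le hC hAB⟩

theorem exists_subseq_tendsto_lintegral_of_gagliardoEnergy_le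
    (hA : IsCompactOperator A) (hB : Function.Injective B) (hab : a < b) {p : ℝ} (hp : 1 ≤ p)
    (hα : 0 < α) (hM : M ≠ ⊤) {f : ℕ → ℝ → E}
    (hf : ∀ n, AEStronglyMeasurable (f n) (volume.restrict (Ioc a b)))
    (hf_lintegral : ∀ n, ∫⁻ t in Ioc a b, ‖f n t‖ₑ ^ p ≤ M)
    (hf_energy : ∀ n, gagliardoEnergy p (1 + α * p) (volume.restrict (Ioc a b))
      (fun t => B (A (f n t))) ≤ M) :
    ∃ φ : ℕ → ℕ, StrictMono φ ∧ ∃ g : ℝ → F,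
      AEStronglyMeasurable g (volume.restrict (Ioc a b)) ∧
      Tendsto (fun n => ∫⁻ t in Ioc a b, ‖A (f (φ n) t) - g t‖ₑ ^ p) atTop (𝓝 0) := by
  lift p to ℝ≥0 using zero_le_one.trans hp
  have hp_pos : (0 : ℝ) < p := zero_lt_one.trans_le hp
  have hp_ne : p ≠ 0 := (NNReal.coe_pos.1 hp_pos).ne'
  have : Fact (1 ≤ (p : ℝ≥0∞)) := ⟨mod_cast hp⟩
  have hnorm (n : ℕ) : eLpNorm (f n) p (volume.restrict (Ioc a b)) ≤ M ^ (p : ℝ)⁻¹ := by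
    rw [ENNReal.le_rpow_inv_iff hp_pos, eLpNorm_nnreal_pow_eq_lintegral hp_ne]
    exact hf_lintegral n
  have hM_root : M ^ (p : ℝ)⁻¹ ≠ ⊤ := ENNReal.rpow_ne_top_of_nonneg (by positivity) hM
  have hmem (n : ℕ) : MemLp (f n) p (volume.restrict (Ioc a b)) :=
    ⟨hf n, (hnorm n).trans_lt hM_root.lt_top⟩
  let u (n : ℕ) : Lp E p (volume.restrict (Ioc a b)) := (hmem n).toLp
  have huf (n : ℕ) : u n =ᵐ[volume.restrict (Ioc a b)] f n := (hmem n).coeFn_toLp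
  have hu_bdd : Bornology.IsBounded (range u) := by
    refine isBounded_iff_forall_norm_le.2 ⟨(M ^ (p : ℝ)⁻¹).toReal, ?_⟩
    rintro _ ⟨n, rfl⟩
    rw [Lp.norm_toLp]
    exact ENNReal.toReal_mono hM_root (hnorm n)
  have hu_energy (n : ℕ) : (∫⁻ t in Ioc a b, ‖u n t‖ₑ ^ (p : ℝ)) +
      gagliardoEnergy p (1 + α * p) (volume.restrict (Ioc a b)) (fun t => B (A (u n t)))
        ≤ M + M := by
    refine add_le_add ((lintegral_congr_ae ?_).trans_le (hf_lintegral n))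
      ((gagliardoEnergy_congr_ae ?_).trans_le (hf_energy n)) <;>
    · filter_upwards [huf n] with t ht
      rw [ht]
  obtain ⟨φ, hφ, g, hg, hlim⟩ := exists_subseq_tendsto_eLpNorm_of_isCompactOperator hA hu_bdd
    (totallyBounded_compLpL_image_of_injective_of_gagliardoEnergy_le hA hB hab hα
      (ENNReal.add_ne_top.2 ⟨hM, hM⟩) hu_bdd (forall_mem_range.2 hu_energy))
  refine ⟨φ, hφ, g, hg, ?_⟩
  have hpow := hlim.ennrpow_const (p : ℝ)
  rw [ENNReal.zero_rpow_of_pos hp_pos] at hpow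
  refine hpow.congr fun n => ?_
  rw [eLpNorm_nnreal_pow_eq_lintegral hp_ne]
  refine lintegral_congr_ae ?_
  filter_upwards [huf (φ n)] with t ht
  rw [ht]

end AubinLions

section Averages

variable {X E : Type*} [MeasurableSpace X] [NormedAddCommGroup E] {μ ν : Measure X} {f : X → E}
  {p : ℝ≥0∞}

theorem enorm_le_eLpNorm_sub_add_eLpNorm [IsProbabilityMeasure μ] (hp : 1 ≤ p)
    (hf : AEStronglyMeasurable f μ) (c : E) :
    ‖c‖ₑ ≤ eLpNorm (fun x => f x - c) p μ + eLpNorm f p μ := by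
  have hc : ‖c‖ₑ = eLpNorm (fun x => f x - (f x - c)) p μ := by
    simp [eLpNorm_const c (zero_lt_one.trans_le hp).ne' (IsProbabilityMeasure.ne_zero μ)]
  rw [hc, add_comm]
  exact eLpNorm_sub_le hf (hf.sub aestronglyMeasurable_const) hp

theorem eLpNorm_sub_le_eLpNorm_sub_prod_add [IsProbabilityMeasure μ] [IsProbabilityMeasure ν]
    (hp : 1 ≤ p) (hμ : AEStronglyMeasurable f μ) (hν : AEStronglyMeasurable f ν) (c : E) :
    eLpNorm (fun x => f x - c) p μ ≤
      eLpNorm (fun z : X × X => f z.1 - f z.2) p (μ.prod ν) + eLpNorm (fun x => f x - c) p ν := by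
  have hfst : eLpNorm ((fun x => f x - c) ∘ Prod.fst) p (μ.prod ν) =
      eLpNorm (fun x => f x - c) p μ :=
    eLpNorm_comp_measurePreserving (hμ.sub aestronglyMeasurable_const) measurePreserving_fst
  have hsnd : eLpNorm ((fun x => f x - c) ∘ Prod.snd) p (μ.prod ν) =
      eLpNorm (fun x => f x - c) p ν :=
    eLpNorm_comp_measurePreserving (hν.sub aestronglyMeasurable_const) measurePreserving_snd
  have hsum : (fun x => f x - c) ∘ Prod.fst =
      (fun z : X × X => f z.1 - f z.2) + (fun x => f x - c) ∘ Prod.snd := by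
    ext z
    simp
  rw [← hfst, ← hsnd, hsum]
  exact eLpNorm_add_le (hμ.comp_fst.sub hν.comp_snd)
    (hν.sub aestronglyMeasurable_const).comp_snd hp

theorem eLpNorm_sub_prod_cond_rpow_le [PseudoMetricSpace X] {p : ℝ≥0} (hp : p ≠ 0)
    {q : ℝ} (hq : 0 ≤ q) {r : ℝ} (hr : 0 < r) {s t : Set X} (hs : MeasurableSet s)
    (ht : MeasurableSet t) (ht₀ : μ t ≠ 0) (hts : t ⊆ s)
    (hdist : ∀ x ∈ s, ∀ y ∈ t, dist x y ≤ r) :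
    eLpNorm (fun z : X × X => f z.1 - f z.2) p (μ[|s].prod μ[|t]) ^ (p : ℝ) ≤
      (μ s)⁻¹ * (μ t)⁻¹ * ENNReal.ofReal (r ^ q) * gagliardoEnergy p q (μ.restrict s) f := by
  have hle : ∫⁻ x in s, ∫⁻ y in t, ‖f x - f y‖ₑ ^ (p : ℝ) ∂μ ∂μ ≤
      ENNReal.ofReal (r ^ q) * gagliardoEnergy p q (μ.restrict s) f := by
    rw [gagliardoEnergy, ← lintegral_const_mul' _ _ ENNReal.ofReal_ne_top]
    refine setLIntegral_mono' hs fun x hx => (setLIntegral_mono' ht fun y hy =>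
      enorm_sub_rpow_le_mul_gagliardoKernel hq hr (hdist x hx y hy)).trans ?_
    rw [lintegral_const_mul' _ _ ENNReal.ofReal_ne_top]
    gcongr
  rw [eLpNorm_nnreal_pow_eq_lintegral hp]
  refine (lintegral_prod_le _).trans ?_
  simp only [ProbabilityTheory.cond, lintegral_smul_measure, smul_eq_mul]
  rw [lintegral_const_mul' _ _ (ENNReal.inv_ne_top.2 ht₀), mul_assoc, mul_assoc]
  gcongr

theorem tendsto_eLpNorm_sub_cond [TopologicalSpace X] {S : Set X} {x : X}
    (hf : ContinuousWithinAt f S x) {ι : Type*} {l : Filter ι} {s : ι → Set X}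
    (hs : ∀ i, MeasurableSet (s i)) (hsx : Tendsto s l (𝓝[S] x).smallSets) :
    Tendsto (fun i => eLpNorm (fun y => f y - f x) p μ[|s i]) l (𝓝 0) := by
  refine ENNReal.tendsto_nhds_zero.2 fun ε hε => ?_
  filter_upwards [tendsto_smallSets_iff.1 hsx _ (hf (closedEBall_mem_nhds _ hε))] with i hi
  calc eLpNorm (fun y => f y - f x) p μ[|s i]
      ≤ ε • μ[|s i] univ ^ p.toReal⁻¹ := eLpNorm_le_of_ae_enorm_bound <|
        ae_cond_of_forall_mem (hs i) fun y hy => (edist_eq_enorm_sub _ _).symm.trans_le (hi hy)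
    _ ≤ ε := mul_le_of_le_one_right' (ENNReal.rpow_le_one prob_le_one (by positivity))

theorem le_tsum_of_forall_le_add {u δ : ℕ → ℝ≥0∞} (hu : ∀ n, u n ≤ δ n + u (n + 1))
    (hlim : Tendsto u atTop (𝓝 0)) : u 0 ≤ ∑' n, δ n := by
  have hsum (n : ℕ) : u 0 ≤ ∑ i ∈ Finset.range n, δ i + u n := by
    induction n with
    | zero => simp
    | succ n ih =>
      rw [Finset.sum_range_succ, add_assoc]
      exact ih.trans (by gcongr; exact hu n)
  simpa using ge_of_tendsto' (ENNReal.summable.hasSum.tendsto_sum_nat.add hlim) hsum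

end Averages

section Morrey

variable {E : Type*} [NormedAddCommGroup E] {f : ℝ → E} {a b α : ℝ} {M : ℝ≥0∞}

theorem isProbabilityMeasure_cond_Ioc (hab : a < b) : IsProbabilityMeasure volume[|Ioc a b] :=
  cond_isProbabilityMeasure_of_finite (by simpa using hab) measure_Ioc_lt_top.ne

theorem aestronglyMeasurable_cond_Ioc (hf : ContinuousOn f (Icc a b)) :
    AEStronglyMeasurable f volume[|Ioc a b] :=
  ((hf.mono Ioc_subset_Icc_self).aestronglyMeasurable measurableSet_Ioc).smul_measure _

theorem eLpNorm_sub_prod_cond_Ioc_le {p : ℝ≥0} (hp : p ≠ 0) (hα : 0 ≤ α) (hab : a < b) {a' b' : ℝ}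
    (ha : a ≤ a') (hb : b' ≤ b) (hhalf : b' - a' = (b - a) / 2)
    (hfM : gagliardoEnergy p (1 + α * p) (volume.restrict (Ioc a b)) f ≤ M) :
    eLpNorm (fun z : ℝ × ℝ => f z.1 - f z.2) p (volume[|Ioc a b].prod volume[|Ioc a' b']) ≤
      (2 * M) ^ (p : ℝ)⁻¹ * ENNReal.ofReal (b - a) ^ (α - (p : ℝ)⁻¹) := by
  have hp_pos : (0 : ℝ) < p := by positivity
  have hvol : volume (Ioc a' b') = ENNReal.ofReal (b - a) / 2 := by
    rw [Real.volume_Ioc, hhalf, ENNReal.ofReal_div_of_pos two_pos, ENNReal.ofReal_ofNat]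
  set h := ENNReal.ofReal (b - a) with hh
  have hh₀ : h ≠ 0 := by simpa [h] using hab
  have hh_top : h ≠ ⊤ := ENNReal.ofReal_ne_top
  have hscale : h⁻¹ * (h / 2)⁻¹ * h ^ (1 + α * p) = 2 * (h ^ (α - (p : ℝ)⁻¹)) ^ (p : ℝ) := by
    have hexp : h⁻¹ * h⁻¹ * h ^ (1 + α * p) = h ^ ((α - (p : ℝ)⁻¹) * p) := by
      rw [← ENNReal.rpow_neg_one, ← ENNReal.rpow_add _ _ hh₀ hh_top,
        ← ENNReal.rpow_add _ _ hh₀ hh_top, sub_mul, inv_mul_cancel₀ hp_pos.ne']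
      ring_nf
    rw [← ENNReal.rpow_mul, ← hexp, ENNReal.inv_div (by simp) (by simp), div_eq_mul_inv]
    ring
  have hprod := eLpNorm_sub_prod_cond_rpow_le (f := f) (μ := volume) hp
    (q := 1 + α * p) (by positivity) (sub_pos.2 hab) measurableSet_Ioc measurableSet_Ioc
    (by simp [hvol, hh₀]) (Ioc_subset_Ioc ha hb) fun x hx y hy => Real.dist_le_of_mem_Icc
      (Ioc_subset_Icc_self hx) (Ioc_subset_Icc_self (Ioc_subset_Ioc ha hb hy))
  rw [← ENNReal.rpow_le_rpow_iff hp_pos, ENNReal.mul_rpow_of_nonneg _ _ hp_pos.le,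
    ENNReal.rpow_inv_rpow hp_pos.ne']
  calc eLpNorm (fun z : ℝ × ℝ => f z.1 - f z.2) p
        (volume[|Ioc a b].prod volume[|Ioc a' b']) ^ (p : ℝ)
      ≤ h⁻¹ * (h / 2)⁻¹ * h ^ (1 + α * p) * M := by
        rw [hh, ENNReal.ofReal_rpow_of_pos (sub_pos.2 hab), ← hh, ← hvol, hh, ← Real.volume_Ioc]
        exact hprod.trans (by gcongr)
    _ = 2 * M * (h ^ (α - (p : ℝ)⁻¹)) ^ (p : ℝ) := by rw [hscale, mul_right_comm]

/-- The constant in Morrey's inequality on an interval, for continuous functions with Gagliardo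
energy at most `M`. The factor `(1 - 2 ^ (-(α - p⁻¹)))⁻¹` sums the geometric series produced by
repeatedly halving the interval; it is `⊤` unless `p⁻¹ < α`. -/
def morreyConst (p α : ℝ) (M : ℝ≥0∞) : ℝ≥0∞ :=
  (2 * M) ^ p⁻¹ * (1 - 2 ^ (-(α - p⁻¹)))⁻¹

theorem morreyConst_ne_top {p : ℝ} (hp : 0 ≤ p) (hα : p⁻¹ < α) (hM : M ≠ ⊤) :
    morreyConst p α M ≠ ⊤ := by
  have hlt : (2 : ℝ≥0∞) ^ (-(α - p⁻¹)) < 1 :=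
    ENNReal.rpow_lt_one_of_one_lt_of_neg (by norm_num) (by linarith)
  exact ENNReal.mul_ne_top
    (ENNReal.rpow_ne_top_of_nonneg (by positivity) (ENNReal.mul_ne_top (by simp) hM))
    (ENNReal.inv_ne_top.2 (tsub_pos_of_lt hlt).ne')

theorem ofReal_div_two_pow_rpow (h : ℝ) (n : ℕ) (σ : ℝ) :
    ENNReal.ofReal (h / 2 ^ n) ^ σ = ENNReal.ofReal h ^ σ * (2 ^ (-σ)) ^ n := by
  rw [ENNReal.ofReal_div_of_pos (by positivity), ENNReal.ofReal_pow zero_le_two,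
    ENNReal.ofReal_ofNat, div_eq_mul_inv, ENNReal.mul_rpow_of_ne_top ENNReal.ofReal_ne_top
      (ENNReal.inv_ne_top.2 (by simp)), ENNReal.inv_rpow, ← ENNReal.rpow_neg,
    ← ENNReal.rpow_natCast, ← ENNReal.rpow_natCast, ← ENNReal.rpow_mul, ← ENNReal.rpow_mul,
    mul_comm (n : ℝ)]

theorem tendsto_Ioc_smallSets_of_tendsto_sub {ι : Type*} {k : Filter ι} {l r : ι → ℝ} {S : Set ℝ}
    [S.OrdConnected] (hl : ∀ i, l i ∈ S) (hr : ∀ i, r i ∈ S) {x : ℝ} (hx : ∀ i, x ∈ Icc (l i) (r i))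
    (hlr : Tendsto (fun i => r i - l i) k (𝓝 0)) :
    Tendsto (fun i => Ioc (l i) (r i)) k (𝓝[S] x).smallSets := by
  have hl_lim : Tendsto l k (𝓝 x) := tendsto_of_tendsto_of_tendsto_of_le_of_le
    (by simpa using hlr.const_sub x) tendsto_const_nhds
    (fun i => by linarith [(hx i).2]) fun i => (hx i).1
  have hr_lim : Tendsto r k (𝓝 x) := tendsto_of_tendsto_of_tendsto_of_le_of_le
    tendsto_const_nhds (by simpa using hlr.const_add x)
    (fun i => (hx i).2) fun i => by linarith [(hx i).1]
  exact ((tendsto_nhdsWithin_iff.2 ⟨hl_lim, .of_forall hl⟩).Icc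
    (tendsto_nhdsWithin_iff.2 ⟨hr_lim, .of_forall hr⟩)).smallSets_mono
      (.of_forall fun _ => Ioc_subset_Icc_self)

theorem eLpNorm_sub_cond_Ioc_le_of_nested {p : ℝ≥0} (hp : 1 ≤ p) (hα : 0 ≤ α) {l r : ℕ → ℝ}
    (hl : Monotone l) (hr : Antitone r) (hlr : ∀ n, r n - l n = (r 0 - l 0) / 2 ^ n)
    (h₀ : l 0 < r 0) (hf : ContinuousOn f (Icc (l 0) (r 0)))
    (hfM : gagliardoEnergy p (1 + α * p) (volume.restrict (Ioc (l 0) (r 0))) f ≤ M) {x : ℝ}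
    (hx : ∀ n, x ∈ Icc (l n) (r n)) :
    eLpNorm (fun t => f t - f x) p volume[|Ioc (l 0) (r 0)] ≤
      morreyConst p α M * ENNReal.ofReal (r 0 - l 0) ^ (α - (p : ℝ)⁻¹) := by
  set h := r 0 - l 0
  set σ := α - (p : ℝ)⁻¹
  have hlr_lt (n : ℕ) : l n < r n := by
    rw [← sub_pos, hlr]
    exact div_pos (sub_pos.2 h₀) (by positivity)
  have hsub (n : ℕ) : Icc (l n) (r n) ⊆ Icc (l 0) (r 0) :=
    Icc_subset_Icc (hl n.zero_le) (hr n.zero_le)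
  have hstep (n : ℕ) : eLpNorm (fun t => f t - f x) p volume[|Ioc (l n) (r n)] ≤
      (2 * M) ^ (p : ℝ)⁻¹ * ENNReal.ofReal h ^ σ * (2 ^ (-σ)) ^ n +
        eLpNorm (fun t => f t - f x) p volume[|Ioc (l (n + 1)) (r (n + 1))] := by
    have := isProbabilityMeasure_cond_Ioc (hlr_lt n)
    have := isProbabilityMeasure_cond_Ioc (hlr_lt (n + 1))
    rw [mul_assoc, ← ofReal_div_two_pow_rpow, ← hlr]
    refine (eLpNorm_sub_le_eLpNorm_sub_prod_add (mod_cast hp)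
      (aestronglyMeasurable_cond_Ioc (hf.mono (hsub n)))
      (aestronglyMeasurable_cond_Ioc (hf.mono (hsub (n + 1)))) _).trans ?_
    gcongr
    refine eLpNorm_sub_prod_cond_Ioc_le (by positivity) hα (hlr_lt n) (hl n.le_succ)
      (hr n.le_succ) (by rw [hlr, hlr n, pow_succ, div_div]) ?_
    exact (gagliardoEnergy_mono_measure (Measure.restrict_mono_set _
      (Ioc_subset_Ioc (hl n.zero_le) (hr n.zero_le))) f).trans hfM
  have hwidth : Tendsto (fun n => r n - l n) atTop (𝓝 0) := by
    simp only [hlr]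
    exact tendsto_const_nhds.div_atTop (tendsto_pow_atTop_atTop_of_one_lt one_lt_two)
  calc eLpNorm (fun t => f t - f x) p volume[|Ioc (l 0) (r 0)]
      ≤ ∑' n : ℕ, (2 * M) ^ (p : ℝ)⁻¹ * ENNReal.ofReal h ^ σ * (2 ^ (-σ)) ^ n :=
        le_tsum_of_forall_le_add hstep
          (tendsto_eLpNorm_sub_cond (hf x (hx 0)) (fun _ => measurableSet_Ioc)
            (tendsto_Ioc_smallSets_of_tendsto_sub (fun n => hsub n (left_mem_Icc.2 (hlr_lt n).le))
              (fun n => hsub n (right_mem_Icc.2 (hlr_lt n).le)) hx hwidth))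
    _ = morreyConst p α M * ENNReal.ofReal h ^ σ := by
        rw [ENNReal.tsum_mul_left, ENNReal.tsum_geometric, morreyConst, mul_right_comm]

theorem eLpNorm_sub_cond_Ioc_le {p : ℝ≥0} (hp : 1 ≤ p) (hα : 0 ≤ α) (hab : a < b)
    (hf : ContinuousOn f (Icc a b))
    (hfM : gagliardoEnergy p (1 + α * p) (volume.restrict (Ioc a b)) f ≤ M) {x : ℝ}
    (hx : x ∈ Icc a b) :
    eLpNorm (fun t => f t - f x) p volume[|Ioc a b] ≤
      morreyConst p α M * ENNReal.ofReal (b - a) ^ (α - (p : ℝ)⁻¹) := by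
  have hxa := sub_nonneg.2 hx.1
  have hbx := sub_nonneg.2 hx.2
  let l (n : ℕ) : ℝ := x - (x - a) / 2 ^ n
  let r (n : ℕ) : ℝ := x + (b - x) / 2 ^ n
  have hl : Monotone l := fun m n hmn => by
    simp only [l]
    gcongr
    exact one_le_two
  have hr : Antitone r := fun m n hmn => by
    simp only [r]
    gcongr
    exact one_le_two
  have hl₀ : l 0 = a := by simp [l]
  have hr₀ : r 0 = b := by simp [r]
  have hlr (n : ℕ) : r n - l n = (r 0 - l 0) / 2 ^ n := by
    rw [hl₀, hr₀]
    ring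
  have hxlr (n : ℕ) : x ∈ Icc (l n) (r n) :=
    ⟨sub_le_self _ (by positivity), le_add_of_nonneg_right (by positivity)⟩
  have hle := eLpNorm_sub_cond_Ioc_le_of_nested (f := f) (M := M) hp hα hl hr hlr
  rw [hl₀, hr₀] at hle
  exact hle hab hf hfM hxlr

theorem edist_le_of_gagliardoEnergy_le {p : ℝ≥0} (hp : 1 ≤ p) (hα : 0 ≤ α)
    (hf : ContinuousOn f (Icc a b))
    (hfM : gagliardoEnergy p (1 + α * p) (volume.restrict (Ioc a b)) f ≤ M) {x y : ℝ}
    (hx : x ∈ Icc a b) (hy : y ∈ Icc a b) :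
    edist (f x) (f y) ≤ 2 * morreyConst p α M * edist x y ^ (α - (p : ℝ)⁻¹) := by
  wlog hxy : x < y generalizing x y
  · rcases (not_lt.1 hxy).eq_or_lt with rfl | hyx
    · simp
    · rw [edist_comm (f x), edist_comm x]
      exact this hy hx hyx
  have := isProbabilityMeasure_cond_Ioc hxy
  have hxy_sub : Icc x y ⊆ Icc a b := Icc_subset_Icc hx.1 hy.2
  have hfxy := hf.mono hxy_sub
  have hfM_xy : gagliardoEnergy p (1 + α * p) (volume.restrict (Ioc x y)) f ≤ M :=
    (gagliardoEnergy_mono_measure (Measure.restrict_mono_set _ (Ioc_subset_Ioc hx.1 hy.2)) f).trans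
      hfM
  have hmeas := aestronglyMeasurable_cond_Ioc hfxy
  calc edist (f x) (f y) = ‖f x - f y‖ₑ := edist_eq_enorm_sub _ _
    _ ≤ eLpNorm (fun t => f t - f y - (f x - f y)) p volume[|Ioc x y] +
          eLpNorm (fun t => f t - f y) p volume[|Ioc x y] :=
        enorm_le_eLpNorm_sub_add_eLpNorm (mod_cast hp) (hmeas.sub aestronglyMeasurable_const) _
    _ ≤ morreyConst p α M * ENNReal.ofReal (y - x) ^ (α - (p : ℝ)⁻¹) +
          morreyConst p α M * ENNReal.ofReal (y - x) ^ (α - (p : ℝ)⁻¹) := by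
        simp only [sub_sub_sub_cancel_right]
        exact add_le_add
          (eLpNorm_sub_cond_Ioc_le hp hα hxy hfxy hfM_xy (left_mem_Icc.2 hxy.le))
          (eLpNorm_sub_cond_Ioc_le hp hα hxy hfxy hfM_xy (right_mem_Icc.2 hxy.le))
    _ = 2 * morreyConst p α M * edist x y ^ (α - (p : ℝ)⁻¹) := by
        rw [← two_mul, ← mul_assoc, edist_comm, edist_dist, Real.dist_eq,
          abs_of_pos (sub_pos.2 hxy)]

theorem enorm_le_of_gagliardoEnergy_le {p : ℝ≥0} (hp : 1 ≤ p) (hα : 0 ≤ α) (hab : a < b)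
    (hf : ContinuousOn f (Icc a b))
    (hfM : gagliardoEnergy p (1 + α * p) (volume.restrict (Ioc a b)) f ≤ M)
    {x : ℝ} (hx : x ∈ Icc a b) :
    ‖f x‖ₑ ≤ morreyConst p α M * ENNReal.ofReal (b - a) ^ (α - (p : ℝ)⁻¹) +
      ((ENNReal.ofReal (b - a))⁻¹ * ∫⁻ t in Ioc a b, ‖f t‖ₑ ^ (p : ℝ)) ^ (p : ℝ)⁻¹ := by
  have := isProbabilityMeasure_cond_Ioc hab
  have hp_pos : (0 : ℝ) < p := zero_lt_one.trans_le hp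
  refine (enorm_le_eLpNorm_sub_add_eLpNorm (mod_cast hp) (aestronglyMeasurable_cond_Ioc hf)
    (f x)).trans (add_le_add (eLpNorm_sub_cond_Ioc_le hp hα hab hf hfM hx) ?_)
  rw [ENNReal.le_rpow_inv_iff hp_pos, eLpNorm_nnreal_pow_eq_lintegral (by positivity),
    ProbabilityTheory.cond, lintegral_smul_measure, Real.volume_Ioc, smul_eq_mul]

end Morrey

section Compactness

theorem equicontinuousOn_of_holderOnWith {ι X Y : Type*} [PseudoEMetricSpace X]
    [PseudoEMetricSpace Y] {S : Set X} {C r : ℝ≥0} (hr : 0 < r) {F : ι → X → Y}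
    (hF : ∀ i, HolderOnWith C r (F i) S) : EquicontinuousOn F S := by
  intro x hx U hU
  obtain ⟨ε, hε, hεU⟩ := mem_uniformity_edist.1 hU
  have hlim : Tendsto (fun y => C * edist x y ^ (r : ℝ)) (𝓝[S] x) (𝓝 0) := by
    have hedist : Tendsto (edist x) (𝓝[S] x) (𝓝 (edist x x)) :=
      (continuous_const.edist continuous_id).tendsto x |>.mono_left nhdsWithin_le_nhds
    have hpow := hedist.ennrpow_const (r : ℝ)
    rw [edist_self, ENNReal.zero_rpow_of_pos (NNReal.coe_pos.2 hr)] at hpow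
    simpa using ENNReal.Tendsto.const_mul hpow (.inr ENNReal.coe_ne_top) (a := (C : ℝ≥0∞))
  filter_upwards [hlim.eventually_lt_const hε, self_mem_nhdsWithin] with y hy hyS i
  exact hεU ((hF i x hx y hyS).trans_lt hy)

theorem exists_subseq_tendstoUniformlyOn_of_equicontinuousOn {X Y : Type*} [TopologicalSpace X]
    [MetricSpace Y] {S : Set X} (hS : IsCompact S) {K : Set Y} (hK : IsCompact K)
    {F : ℕ → X → Y} (hF : EquicontinuousOn F S) (hFK : ∀ n, MapsTo (F n) S K) :
    ∃ φ : ℕ → ℕ, StrictMono φ ∧ ∃ g : X → Y, ContinuousOn g S ∧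
      TendstoUniformlyOn (fun n => F (φ n)) g atTop S := by
  have := isCompact_iff_compactSpace.1 hS
  have hFcont (n : ℕ) : ContinuousOn (F n) S := fun x hx => (hF x hx).continuousWithinAt n
  let Φ (n : ℕ) : BoundedContinuousFunction S Y := .mkOfCompact ⟨_, (hFcont n).domRestrict⟩
  have hΦ : IsCompact (closure (range Φ)) := by
    refine BoundedContinuousFunction.arzela_ascoli K hK _ ?_ ?_
    · rintro _ x ⟨n, rfl⟩
      exact hFK n x.2
    · have hmem (g : range Φ) : ∃ n, Φ n = g := g.2
      choose n hn using hmem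
      have hcoe : ((↑) : range Φ → S → Y) = (S.domRestrict ∘ F) ∘ n :=
        funext fun g => congrArg DFunLike.coe (hn g).symm
      exact hcoe ▸ ((equicontinuous_restrict_iff F).2 hF).comp n
  obtain ⟨G, -, φ, hφ, hG⟩ := hΦ.tendsto_subseq fun n => subset_closure (mem_range_self n)
  have hlim : TendstoUniformlyOn (fun n => F (φ n)) (Function.extend Subtype.val G (F 0))
      atTop S := by
    rw [tendstoUniformlyOn_iff_tendstoUniformly_comp_coe,
      Function.extend_comp Subtype.val_injective]
    exact BoundedContinuousFunction.tendsto_iff_tendstoUniformly.1 hG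
  exact ⟨φ, hφ, _, hlim.continuousOn (.of_forall fun n => hFcont (φ n)), hlim⟩

variable {E F : Type*} [NormedAddCommGroup E] [NormedSpace ℝ E] [NormedAddCommGroup F]
  [NormedSpace ℝ F]

theorem exists_subseq_tendstoUniformlyOn_of_isCompactOperator {X : Type*} [PseudoMetricSpace X]
    {A : E →L[ℝ] F} (hA : IsCompactOperator A) {S : Set X} (hS : IsCompact S) {C r : ℝ≥0}
    (hr : 0 < r) {R : ℝ} {f : ℕ → X → E} (hf : ∀ n, HolderOnWith C r (f n) S)
    (hfR : ∀ n, ∀ x ∈ S, ‖f n x‖ ≤ R) :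
    ∃ φ : ℕ → ℕ, StrictMono φ ∧ ∃ g : X → F, ContinuousOn g S ∧
      TendstoUniformlyOn (fun n x => A (f (φ n) x)) g atTop S :=
  exists_subseq_tendstoUniformlyOn_of_equicontinuousOn hS
    (hA.isCompact_closure_image_closedBall (f := A.toLinearMap) R)
    (equicontinuousOn_of_holderOnWith (by simpa) fun n =>
      A.lipschitz.holderWith.comp_holderOnWith (hf n))
    fun n x hx => subset_closure (mem_image_of_mem A (mem_closedBall_zero_iff.2 (hfR n x hx)))

theorem exists_subseq_tendstoUniformlyOn_of_gagliardoEnergy_le {A : E →L[ℝ] F}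
    (hA : IsCompactOperator A) {a b α : ℝ} (hab : a < b) {p : ℝ} (hp : 1 ≤ p) (hα : p⁻¹ < α)
    {M : ℝ≥0∞} (hM : M ≠ ⊤) {f : ℕ → ℝ → E} (hf : ∀ n, ContinuousOn (f n) (Icc a b))
    (hf_lintegral : ∀ n, ∫⁻ t in Ioc a b, ‖f n t‖ₑ ^ p ≤ M)
    (hf_energy : ∀ n, gagliardoEnergy p (1 + α * p) (volume.restrict (Ioc a b)) (f n) ≤ M) :
    ∃ φ : ℕ → ℕ, StrictMono φ ∧ ∃ g : ℝ → F, ContinuousOn g (Icc a b) ∧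
      TendstoUniformlyOn (fun n t => A (f (φ n) t)) g atTop (Icc a b) := by
  lift p to ℝ≥0 using zero_le_one.trans hp
  have hp_pos : (0 : ℝ) < p := zero_lt_one.trans_le hp
  have hα_pos : 0 < α := (inv_pos.2 hp_pos).trans hα
  have hC : morreyConst p α M ≠ ⊤ := morreyConst_ne_top hp_pos.le hα hM
  have hsub : 0 < α - (p : ℝ)⁻¹ := sub_pos.2 hα
  let R : ℝ≥0∞ := morreyConst p α M * ENNReal.ofReal (b - a) ^ (α - (p : ℝ)⁻¹) +
    ((ENNReal.ofReal (b - a))⁻¹ * M) ^ (p : ℝ)⁻¹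
  have hR : R ≠ ⊤ := by
    refine ENNReal.add_ne_top.2 ⟨ENNReal.mul_ne_top hC ?_, ?_⟩ <;>
      refine ENNReal.rpow_ne_top_of_nonneg (by positivity) ?_
    · exact ENNReal.ofReal_ne_top
    · exact ENNReal.mul_ne_top (by simpa using hab) hM
  refine exists_subseq_tendstoUniformlyOn_of_isCompactOperator hA isCompact_Icc
    (Real.toNNReal_pos.2 hsub) (C := (2 * morreyConst p α M).toNNReal) (R := R.toReal)
    (fun n x hx y hy => ?_) fun n x hx => ?_
  · rw [ENNReal.coe_toNNReal (ENNReal.mul_ne_top (by simp) hC), Real.coe_toNNReal _ hsub.le]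
    exact edist_le_of_gagliardoEnergy_le hp hα_pos.le (hf n) (hf_energy n) hx hy
  · rw [← toReal_enorm]
    refine ENNReal.toReal_mono hR ?_
    refine (enorm_le_of_gagliardoEnergy_le hp hα_pos.le hab (hf n) (hf_energy n) hx).trans ?_
    simp only [R]
    gcongr
    exact hf_lintegral n

end Compactness

theorem flandoli_gatarek_compactness_general {B₀ B B₁ : Type*}
    [NormedAddCommGroup B₀] [NormedSpace ℝ B₀] [NormedAddCommGroup B] [NormedSpace ℝ B]
    [NormedAddCommGroup B₁] [NormedSpace ℝ B₁] (ι₀ : B₀ →L[ℝ] B) (hι₀ : IsCompactOperator ι₀)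
    (ι₁ : B →L[ℝ] B₁) (hι₁ : Function.Injective ι₁) {a b p α : ℝ} (hab : a < b) (hp : 1 ≤ p)
    (hα : 0 < α) :
    (∀ (f : ℕ → ℝ → B₀) (M : ℝ≥0∞), M ≠ ⊤ →
      (∀ n, AEStronglyMeasurable (f n) (volume.restrict (Ioc a b))) →
      (∀ n, ∫⁻ t in Ioc a b, ‖f n t‖ₑ ^ p ≤ M) →
      (∀ n, gagliardoEnergy p (1 + α * p) (volume.restrict (Ioc a b))
        (fun t => ι₁ (ι₀ (f n t))) ≤ M) →
      ∃ φ : ℕ → ℕ, StrictMono φ ∧ ∃ g : ℝ → B,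
        AEStronglyMeasurable g (volume.restrict (Ioc a b)) ∧
        Tendsto (fun n => ∫⁻ t in Ioc a b, ‖ι₀ (f (φ n) t) - g t‖ₑ ^ p) atTop (𝓝 0)) ∧
    (1 < α * p → ∀ (f : ℕ → ℝ → B₀) (M : ℝ≥0∞), M ≠ ⊤ →
      (∀ n, ContinuousOn (f n) (Icc a b)) →
      (∀ n, (∫⁻ t in Ioc a b, ‖f n t‖ₑ ^ p) +
        gagliardoEnergy p (1 + α * p) (volume.restrict (Ioc a b)) (f n) ≤ M) →
      ∃ φ : ℕ → ℕ, StrictMono φ ∧ ∃ g : ℝ → B, ContinuousOn g (Icc a b) ∧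
        TendstoUniformlyOn (fun n t => ι₀ (f (φ n) t)) g atTop (Icc a b)) := by
  refine ⟨fun f M hM hf hf_lintegral hf_energy => ?_, fun hαp f M hM hf hf_norm => ?_⟩
  · exact exists_subseq_tendsto_lintegral_of_gagliardoEnergy_le hι₀ hι₁ hab hp hα hM hf
      hf_lintegral hf_energy
  · have hpα : p⁻¹ < α := (inv_lt_iff_one_lt_mul₀ (zero_lt_one.trans_le hp)).2 hαp
    exact exists_subseq_tendstoUniformlyOn_of_gagliardoEnergy_le hι₀ hab hp hpα hM hf
      (fun n => le_self_add.trans (hf_norm n)) fun n => le_add_self.trans (hf_norm n)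

theorem flandoli_gatarek_compactness
    {B₀ B B₁ : Type*}
    [NormedAddCommGroup B₀] [NormedSpace ℝ B₀]
    [NormedAddCommGroup B] [NormedSpace ℝ B]
    [NormedAddCommGroup B₁] [NormedSpace ℝ B₁]
    (ι₀ : B₀ →L[ℝ] B) (hι₀inj : Function.Injective ι₀) (hι₀cpt : IsCompactOperator ι₀)
    (ι₁ : B →L[ℝ] B₁) (hι₁inj : Function.Injective ι₁)
    (T : ℝ) (hT : 0 < T) (p α : ℝ) (hp : 1 < p) (hα0 : 0 < α) (hα1 : α < 1) :
    -- (a) L^p(0,T;B₀) ∩ W^{α,p}(0,T;B₁) ↪ L^p(0,T;B) compactly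
    (∀ (f : ℕ → ℝ → B₀) (Mb : ℝ≥0∞), Mb ≠ ⊤ →
      (∀ n, AEStronglyMeasurable (f n) (volume.restrict (Set.Ioc 0 T))) →
      (∀ n, (∫⁻ t in Set.Ioc 0 T, (‖f n t‖₊ : ℝ≥0∞) ^ p) ≤ Mb) →
      (∀ n, (∫⁻ t in Set.Ioc 0 T, (‖ι₁ (ι₀ (f n t))‖₊ : ℝ≥0∞) ^ p)
          + (∫⁻ t in Set.Ioc 0 T, ∫⁻ s in Set.Ioc 0 T,
              (‖ι₁ (ι₀ (f n t)) - ι₁ (ι₀ (f n s))‖₊ : ℝ≥0∞) ^ p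
                / ENNReal.ofReal (|t - s| ^ (1 + α * p))) ≤ Mb) →
      ∃ φ : ℕ → ℕ, StrictMono φ ∧ ∃ g : ℝ → B,
        AEStronglyMeasurable g (volume.restrict (Set.Ioc 0 T)) ∧
        Filter.Tendsto
          (fun n => ∫⁻ t in Set.Ioc 0 T, (‖ι₀ (f (φ n) t) - g t‖₊ : ℝ≥0∞) ^ p)
          Filter.atTop (nhds 0)) ∧
    -- (b) W^{α,p}(0,T;B₀) ↪ C⁰([0,T];B) compactly, when αp > 1
    (α * p > 1 →
      ∀ (f : ℕ → ℝ → B₀) (Mb : ℝ≥0∞), Mb ≠ ⊤ →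
      (∀ n, ContinuousOn (f n) (Set.Icc 0 T)) →
      (∀ n, (∫⁻ t in Set.Ioc 0 T, (‖f n t‖₊ : ℝ≥0∞) ^ p)
          + (∫⁻ t in Set.Ioc 0 T, ∫⁻ s in Set.Ioc 0 T,
              (‖f n t - f n s‖₊ : ℝ≥0∞) ^ p
                / ENNReal.ofReal (|t - s| ^ (1 + α * p))) ≤ Mb) →
      ∃ φ : ℕ → ℕ, StrictMono φ ∧ ∃ g : ℝ → B, ContinuousOn g (Set.Icc 0 T) ∧
        TendstoUniformlyOn (fun n t => ι₀ (f (φ n) t)) g Filter.atTop (Set.Icc 0 T)) := by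
  obtain ⟨hL, hC⟩ := flandoli_gatarek_compactness_general ι₀ hι₀cpt ι₁ hι₁inj hT hp.le hα0
  exact ⟨fun f M hM hf hB₀ hB₁ => hL f M hM hf hB₀ fun n => le_add_self.trans (hB₁ n), hC⟩

end
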